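/- Let V_x^1, V_x^2, V_y^1, V_y^2, Δ_xV_x^1, Δ_xV_x^2, Δ_yV_y^1, Δ_yV_y^2, Δ_xR^z, Δ_yR^z be real numbers. Define the second-order curl-preserving reconstruction V^x(x,y) = (V_x^1 + Δ_xV_x^1·x)(1/2 − y) + (V_x^2 + Δ_xV_x^2·x)(1/2 + y) + a_yy(1 − 4y²) and V^y(x,y) = (V_y^1 + Δ_yV_y^1·y)(1/2 − x) + (V_y^2 + Δ_yV_y^2·y)(1/2 + x) + b_xx(1 − 4x²), with b_xx = (−Δ_xR^z + Δ_xV_x^1 − Δ_xV_x^2)/8 and a_yy = (Δ_yR^z + Δ_yV_y^1 − Δ_yV_y^2)/8. Then for every (x,y) ∈ ℝ², ∂_x V^y − ∂_y V^x = (V_x^1 − V_x^2 + V_y^2 − V_y^1) + Δ_xR^z·x + Δ_yR^z·y. In particular, taking Δ_xR^z = Δ_yR^z = 0 and a vanishing discrete circulation V_x^1 − V_x^2 + V_y^2 − V_y^1 = 0 yields a reconstruction that is exactly curl-free at every point. -/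

import Mathlib

/-!
Transverse to its edges, each component interpolates linearly between the two edge traces and adds
a parabola vanishing on both edges. The linear part contributes the discrete circulation of the
traces to the curl, the parabolas contribute `-8 b x + 8 a y`. For affine traces both
contributions are affine, and `a`, `b` are chosen so that the linear moments come out as prescribed.
-/

section

variable {𝕜 : Type*} [NontriviallyNormedField 𝕜]

/-- The quadratic profile on `[-1/2, 1/2]` with end values `u` and `v`. The coefficient `c`
multiplies the bubble `1 - 4 * t ^ 2`, which vanishes at both ends, so that it does not affect
the edge data. -/
def edgeInterpolant (u v c t : 𝕜) : 𝕜 :=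
  u * (1 / 2 - t) + v * (1 / 2 + t) + c * (1 - 4 * t ^ 2)

/-- The scalar curl `∂ₓ Vy - ∂ᵧ Vx` of the planar field `(Vx, Vy)`, given in curried form.
As for `deriv`, a partial derivative that does not exist counts as `0`. -/
noncomputable def scalarCurl (Vx Vy : 𝕜 → 𝕜 → 𝕜) (x y : 𝕜) : 𝕜 :=
  deriv (fun x' => Vy x' y) x - deriv (fun y' => Vx x y') y

theorem hasDerivAt_edgeInterpolant (u v c t : 𝕜) :
    HasDerivAt (edgeInterpolant u v c) (v - u - 8 * c * t) t := by
  have left := ((hasDerivAt_id' t).const_sub (1 / 2)).const_mul u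
  have right := ((hasDerivAt_id' t).const_add (1 / 2)).const_mul v
  have bubble := (((hasDerivAt_pow 2 t).const_mul 4).const_sub 1).const_mul c
  refine ((left.add right).add bubble).congr_deriv ?_
  norm_num
  ring

theorem scalarCurl_edgeInterpolant (f₁ f₂ g₁ g₂ : 𝕜 → 𝕜) (a b x y : 𝕜) :
    scalarCurl (fun x y => edgeInterpolant (f₁ x) (f₂ x) a y)
        (fun x y => edgeInterpolant (g₁ y) (g₂ y) b x) x y =
      (f₁ x - f₂ x + g₂ y - g₁ y) - 8 * b * x + 8 * a * y := by
  have hx := (hasDerivAt_edgeInterpolant (g₁ y) (g₂ y) b x).deriv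
  have hy := (hasDerivAt_edgeInterpolant (f₁ x) (f₂ x) a y).deriv
  rw [scalarCurl, hx, hy]
  ring

theorem stmt_2_general [NeZero (2 : 𝕜)]
    (Vx1 Vx2 Vy1 Vy2 dxVx1 dxVx2 dyVy1 dyVy2 dxRz dyRz ayy bxx : 𝕜)
    (hb : bxx = (-dxRz + dxVx1 - dxVx2) / 8)
    (ha : ayy = (dyRz + dyVy1 - dyVy2) / 8) :
    (∀ x y : 𝕜,
      scalarCurl (fun x y => edgeInterpolant (Vx1 + dxVx1 * x) (Vx2 + dxVx2 * x) ayy y)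
          (fun x y => edgeInterpolant (Vy1 + dyVy1 * y) (Vy2 + dyVy2 * y) bxx x) x y =
        (Vx1 - Vx2 + Vy2 - Vy1) + dxRz * x + dyRz * y) ∧
    (dxRz = 0 → dyRz = 0 → Vx1 - Vx2 + Vy2 - Vy1 = 0 →
      ∀ x y : 𝕜,
        scalarCurl (fun x y => edgeInterpolant (Vx1 + dxVx1 * x) (Vx2 + dxVx2 * x) ayy y)
            (fun x y => edgeInterpolant (Vy1 + dyVy1 * y) (Vy2 + dyVy2 * y) bxx x) x y = 0) := by
  have eight_ne_zero : (8 : 𝕜) ≠ 0 := by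
    rw [show (8 : 𝕜) = 2 ^ 3 by norm_num]
    exact pow_ne_zero 3 two_ne_zero
  have x_moment : 8 * bxx = -dxRz + dxVx1 - dxVx2 := by rw [hb, mul_div_cancel₀ _ eight_ne_zero]
  have y_moment : 8 * ayy = dyRz + dyVy1 - dyVy2 := by rw [ha, mul_div_cancel₀ _ eight_ne_zero]
  have curl_eq (x y : 𝕜) :
      scalarCurl (fun x y => edgeInterpolant (Vx1 + dxVx1 * x) (Vx2 + dxVx2 * x) ayy y)
          (fun x y => edgeInterpolant (Vy1 + dyVy1 * y) (Vy2 + dyVy2 * y) bxx x) x y =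
        (Vx1 - Vx2 + Vy2 - Vy1) + dxRz * x + dyRz * y := by
    rw [scalarCurl_edgeInterpolant (fun x => Vx1 + dxVx1 * x) (fun x => Vx2 + dxVx2 * x)
      (fun y => Vy1 + dyVy1 * y) (fun y => Vy2 + dyVy2 * y), x_moment, y_moment]
    ring
  refine ⟨curl_eq, fun hx hy hcirc x y => ?_⟩
  rw [curl_eq, hcirc, hx, hy]
  ring

end

/-- the second-order curl-preserving reconstruction on the unit
square, with the interior coefficients `a_yy`, `b_xx` given by eqn. (2.9),
reproduces the prescribed linear curl exactly at every point; in particular,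
for vanishing circulation moments it is exactly curl-free. -/
theorem stmt_2 (Vx1 Vx2 Vy1 Vy2 dxVx1 dxVx2 dyVy1 dyVy2 dxRz dyRz ayy bxx : ℝ)
    (hb : bxx = (-dxRz + dxVx1 - dxVx2) / 8)
    (ha : ayy = (dyRz + dyVy1 - dyVy2) / 8) :
    (∀ x y : ℝ,
      deriv (fun x' : ℝ =>
          (Vy1 + dyVy1 * y) * (1 / 2 - x') + (Vy2 + dyVy2 * y) * (1 / 2 + x') +
            bxx * (1 - 4 * x' ^ 2)) x -
        deriv (fun y' : ℝ =>
          (Vx1 + dxVx1 * x) * (1 / 2 - y') + (Vx2 + dxVx2 * x) * (1 / 2 + y') +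
            ayy * (1 - 4 * y' ^ 2)) y =
      (Vx1 - Vx2 + Vy2 - Vy1) + dxRz * x + dyRz * y) ∧
    (dxRz = 0 → dyRz = 0 → Vx1 - Vx2 + Vy2 - Vy1 = 0 →
      ∀ x y : ℝ,
        deriv (fun x' : ℝ =>
            (Vy1 + dyVy1 * y) * (1 / 2 - x') + (Vy2 + dyVy2 * y) * (1 / 2 + x') +
              bxx * (1 - 4 * x' ^ 2)) x -
          deriv (fun y' : ℝ =>
            (Vx1 + dxVx1 * x) * (1 / 2 - y') + (Vx2 + dxVx2 * x) * (1 / 2 + y') +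
              ayy * (1 - 4 * y' ^ 2)) y = 0) :=
  stmt_2_general Vx1 Vx2 Vy1 Vy2 dxVx1 dxVx2 dyVy1 dyVy2 dxRz dyRz ayy bxx hb ha
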